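/- Given a finite Markov decision process, let V* : S → ℝ satisfy T_m V* = V* and let (β_k)_{k≥1} be a sequence of positive reals. Let V₀ : S → ℝ be arbitrary and define V_t = T_{β_t}(T_{β_{t−1}}(… T_{β_1}(V₀)…)) for t ≥ 1. Then for every t ≥ 1, ‖V_t − V*‖∞ ≤ γ^t·‖V₀ − V*‖∞ + log(|A|)·∑_{k=1}^{t} γ^{t−k}/β_k. -/

import Mathlib

noncomputable def boltz {ι : Type*} [Fintype ι] (β : ℝ) (x : ι → ℝ) : ℝ :=
  (∑ i, Real.exp (β * x i) * x i) / ∑ i, Real.exp (β * x i)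

noncomputable def fmax {ι : Type*} [Fintype ι] [Nonempty ι] (x : ι → ℝ) : ℝ :=
  Finset.univ.sup' Finset.univ_nonempty x

noncomputable def fmin {ι : Type*} [Fintype ι] [Nonempty ι] (x : ι → ℝ) : ℝ :=
  Finset.univ.inf' Finset.univ_nonempty x

noncomputable def Qval {S A : Type*} [Fintype S] (p : S → A → S → ℝ) (r : S → A → ℝ)
    (γ : ℝ) (V : S → ℝ) (s : S) (a : A) : ℝ :=
  r s a + γ * ∑ s', p s a s' * V s'

noncomputable def Tm {S A : Type*} [Fintype S] [Fintype A] [Nonempty A]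
    (p : S → A → S → ℝ) (r : S → A → ℝ) (γ : ℝ) (V : S → ℝ) (s : S) : ℝ :=
  fmax (Qval p r γ V s)

noncomputable def Tb {S A : Type*} [Fintype S] [Fintype A]
    (p : S → A → S → ℝ) (r : S → A → ℝ) (γ : ℝ) (β : ℝ) (V : S → ℝ) (s : S) : ℝ :=
  boltz β (Qval p r γ V s)

noncomputable def supNorm {S : Type*} [Fintype S] [Nonempty S] (V : S → ℝ) : ℝ :=
  fmax (fun s => |V s|)

/-!
Jensen's inequality for `exp` under the Gibbs weights `exp (β * x i) / Z`, where
`Z = ∑ i, exp (β * x i)`, gives `exp (-β * boltz β x) ≤ n / Z` with `n` the number of coordinates.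
Since `Z` is at least each of its terms, `boltz β x` falls short of the maximum by at most
`log n / β`, so `T_β` is uniformly within `log |A| / β` of `T_m`. As `T_m` is `|γ|`-Lipschitz for
the sup norm and fixes `V*`, the error satisfies `e (t + 1) ≤ |γ| * e t + log |A| / β (t + 1)`, and
the discrete Grönwall inequality solves this recursion.
-/

section DiscreteGronwall

open Finset

variable {R : Type*} [CommSemiring R] [PartialOrder R] [IsOrderedRing R]

theorem le_pow_mul_add_sum_Icc_of_le_mul_add {u b : ℕ → R} {c : R} (hc : 0 ≤ c)
    (hu : ∀ n, u (n + 1) ≤ c * u n + b (n + 1)) (t : ℕ) :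
    u t ≤ c ^ t * u 0 + ∑ k ∈ Icc 1 t, c ^ (t - k) * b k := by
  have hgronwall := discrete_gronwall_prod_general (c := fun _ => c) (b := fun n => b (n + 1))
    (fun n _ => hu n) (fun _ _ => hc) t.zero_le
  have hshift : ∑ k ∈ Ico 0 t, b (k + 1) * c ^ (t - (k + 1)) =
      ∑ k ∈ Icc 1 t, c ^ (t - k) * b k := by
    rw [sum_Ico_add' (fun k => b k * c ^ (t - k)), zero_add, Ico_add_one_right_eq_Icc]
    exact sum_congr rfl fun _ _ => mul_comm _ _
  simpa only [prod_const, Nat.card_Ico, Nat.sub_zero, hshift, mul_comm (u 0)] using hgronwall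

end DiscreteGronwall

section FiniteMax

open Finset

variable {ι : Type*} [Fintype ι] [Nonempty ι]

theorem le_fmax (x : ι → ℝ) (i : ι) : x i ≤ fmax x :=
  le_sup' x (mem_univ i)

theorem fmax_le_iff {x : ι → ℝ} {c : ℝ} : fmax x ≤ c ↔ ∀ i, x i ≤ c := by
  simp only [fmax, sup'_le_iff, mem_univ, true_imp_iff]

theorem supNorm_eq_norm (x : ι → ℝ) : supNorm x = ‖x‖ :=
  eq_of_forall_ge_iff fun _ => fmax_le_iff.trans (pi_norm_le_iff_of_nonempty x).symm

theorem fmax_le_fmax_add_norm_sub (x y : ι → ℝ) : fmax x ≤ fmax y + ‖x - y‖ :=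
  fmax_le_iff.2 fun i => by
    have hxy : x i - y i ≤ ‖x - y‖ := (le_abs_self _).trans (norm_le_pi_norm (x - y) i)
    linarith [le_fmax y i]

theorem abs_fmax_sub_fmax_le (x y : ι → ℝ) : |fmax x - fmax y| ≤ ‖x - y‖ :=
  abs_sub_le_iff.2 ⟨sub_le_iff_le_add'.2 (fmax_le_fmax_add_norm_sub x y),
    norm_sub_rev x y ▸ sub_le_iff_le_add'.2 (fmax_le_fmax_add_norm_sub y x)⟩

end FiniteMax

section Boltzmann

open Finset Real

variable {ι : Type*} [Fintype ι]

theorem boltz_eq_centerMass (β : ℝ) (x : ι → ℝ) :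
    boltz β x = univ.centerMass (fun i => exp (β * x i)) x := by
  simp only [boltz, centerMass, smul_eq_mul, div_eq_inv_mul]

variable [Nonempty ι]

theorem sum_exp_pos (x : ι → ℝ) : 0 < ∑ i, exp (x i) :=
  sum_pos (fun _ _ => exp_pos _) univ_nonempty

theorem boltz_le_fmax (β : ℝ) (x : ι → ℝ) : boltz β x ≤ fmax x := by
  rw [boltz_eq_centerMass]
  exact centerMass_le_sup (fun _ _ => (exp_pos _).le) (sum_exp_pos fun i => β * x i)

theorem exp_neg_mul_boltz_le (β : ℝ) (x : ι → ℝ) :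
    exp (-β * boltz β x) ≤ Fintype.card ι / ∑ i, exp (β * x i) := by
  rw [boltz_eq_centerMass, ← smul_eq_mul, ← centerMass_smul]
  calc exp (univ.centerMass (fun i => exp (β * x i)) fun i => -β • x i)
      ≤ univ.centerMass (fun i => exp (β * x i)) fun i => exp (-β • x i) :=
        convexOn_exp.map_centerMass_le (fun _ _ => (exp_pos _).le)
          (sum_exp_pos fun i => β * x i) fun _ _ => Set.mem_univ _
    _ = Fintype.card ι / ∑ i, exp (β * x i) := by
        simp [centerMass, ← exp_add, div_eq_inv_mul]

theorem mul_sub_boltz_le (β : ℝ) (x : ι → ℝ) (i : ι) :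
    β * (x i - boltz β x) ≤ log (Fintype.card ι) := by
  have hterm : exp (β * x i) ≤ ∑ j, exp (β * x j) :=
    single_le_sum (f := fun j => exp (β * x j)) (fun _ _ => (exp_pos _).le) (mem_univ i)
  rw [le_log_iff_exp_le (by exact_mod_cast Fintype.card_pos)]
  calc exp (β * (x i - boltz β x))
      = exp (-β * boltz β x) * exp (β * x i) := by rw [← exp_add]; ring_nf
    _ ≤ Fintype.card ι / (∑ j, exp (β * x j)) * ∑ j, exp (β * x j) :=
        mul_le_mul (exp_neg_mul_boltz_le β x) hterm (exp_pos _).le (by positivity)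
    _ = Fintype.card ι := div_mul_cancel₀ _ (sum_exp_pos fun j => β * x j).ne'

theorem abs_boltz_sub_fmax_le {β : ℝ} (hβ : 0 < β) (x : ι → ℝ) :
    |boltz β x - fmax x| ≤ log (Fintype.card ι) / β := by
  have hmax : fmax x ≤ boltz β x + log (Fintype.card ι) / β := fmax_le_iff.2 fun i => by
    rw [← sub_le_iff_le_add', le_div_iff₀' hβ]
    exact mul_sub_boltz_le β x i
  rw [abs_of_nonpos (sub_nonpos.2 (boltz_le_fmax β x))]
  linarith

end Boltzmann

section Bellman

open Finset Real

variable {S A : Type*} [Fintype S] {p : S → A → S → ℝ}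

theorem abs_Qval_sub_Qval_le {s : S} {a : A} (hp : ∑ s', |p s a s'| ≤ 1) (r : S → A → ℝ) (γ : ℝ)
    (V W : S → ℝ) : |Qval p r γ V s a - Qval p r γ W s a| ≤ |γ| * ‖V - W‖ := by
  have hdiff : Qval p r γ V s a - Qval p r γ W s a = γ * ∑ s', p s a s' * (V - W) s' := by
    simp only [Qval, Pi.sub_apply, mul_sub, sum_sub_distrib]
    ring
  rw [hdiff, abs_mul]
  gcongr
  calc |∑ s', p s a s' * (V - W) s'|
      ≤ ∑ s', |p s a s'| * |(V - W) s'| := by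
        simpa only [abs_mul] using abs_sum_le_sum_abs (fun s' => p s a s' * (V - W) s') univ
    _ ≤ ∑ s', |p s a s'| * ‖V - W‖ := by
        gcongr with s'
        exact norm_le_pi_norm (V - W) s'
    _ ≤ ‖V - W‖ := by
        rw [← sum_mul]
        exact mul_le_of_le_one_left (norm_nonneg _) hp

variable [Fintype A] [Nonempty A]

theorem norm_Tm_sub_Tm_le (hp : ∀ s a, ∑ s', |p s a s'| ≤ 1) (r : S → A → ℝ) (γ : ℝ)
    (V W : S → ℝ) : ‖Tm p r γ V - Tm p r γ W‖ ≤ |γ| * ‖V - W‖ :=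
  (pi_norm_le_iff_of_nonneg (by positivity)).2 fun s =>
    (abs_fmax_sub_fmax_le _ _).trans <| (pi_norm_le_iff_of_nonneg (by positivity)).2 fun a =>
      abs_Qval_sub_Qval_le (hp s a) r γ V W

theorem norm_Tb_sub_Tm_le (p : S → A → S → ℝ) (r : S → A → ℝ) (γ : ℝ) {β : ℝ} (hβ : 0 < β)
    (V : S → ℝ) : ‖Tb p r γ β V - Tm p r γ V‖ ≤ log (Fintype.card A) / β :=
  (pi_norm_le_iff_of_nonneg (by positivity)).2 fun s => abs_boltz_sub_fmax_le hβ (Qval p r γ V s)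

theorem norm_Tb_sub_Tm_le_mul_add (hp : ∀ s a, ∑ s', |p s a s'| ≤ 1) (r : S → A → ℝ) (γ : ℝ)
    {β : ℝ} (hβ : 0 < β) (V W : S → ℝ) :
    ‖Tb p r γ β V - Tm p r γ W‖ ≤ |γ| * ‖V - W‖ + log (Fintype.card A) / β := by
  rw [add_comm]
  exact (norm_sub_le_norm_sub_add_norm_sub _ (Tm p r γ V) _).trans
    (add_le_add (norm_Tb_sub_Tm_le p r γ hβ V) (norm_Tm_sub_Tm_le hp r γ V W))

theorem dbs_vi_error_recursion_general (hp : ∀ s a, ∑ s', |p s a s'| ≤ 1) (r : S → A → ℝ) (γ : ℝ)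
    {Vstar : S → ℝ} (hVstar : Tm p r γ Vstar = Vstar) {β : ℕ → ℝ} (hβ : ∀ k ≥ 1, 0 < β k)
    {Vseq : ℕ → S → ℝ} (hVsucc : ∀ t, Vseq (t + 1) = Tb p r γ (β (t + 1)) (Vseq t)) (t : ℕ) :
    ‖Vseq t - Vstar‖ ≤ |γ| ^ t * ‖Vseq 0 - Vstar‖
      + log (Fintype.card A) * ∑ k ∈ Icc 1 t, |γ| ^ (t - k) / β k := by
  have hstep (n : ℕ) : ‖Vseq (n + 1) - Vstar‖ ≤
      |γ| * ‖Vseq n - Vstar‖ + log (Fintype.card A) / β (n + 1) := by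
    simpa only [hVstar, ← hVsucc] using
      norm_Tb_sub_Tm_le_mul_add hp r γ (hβ (n + 1) n.succ_pos) (Vseq n) Vstar
  refine (le_pow_mul_add_sum_Icc_of_le_mul_add (u := fun n => ‖Vseq n - Vstar‖)
    (b := fun n => log (Fintype.card A) / β n) (abs_nonneg γ) hstep t).trans_eq ?_
  simp only [mul_sum, mul_div_left_comm]

end Bellman

theorem dbs_vi_error_recursion {S A : Type*} [Fintype S] [Fintype A] [Nonempty S] [Nonempty A]
    (p : S → A → S → ℝ) (hp0 : ∀ s a s', 0 ≤ p s a s') (hp1 : ∀ s a, ∑ s', p s a s' = 1)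
    (r : S → A → ℝ) (γ : ℝ) (hγ0 : 0 ≤ γ) (hγ1 : γ < 1)
    (Vstar : S → ℝ) (hVstar : Tm p r γ Vstar = Vstar)
    (β : ℕ → ℝ) (hβ : ∀ k ≥ 1, 0 < β k)
    (V₀ : S → ℝ) (Vseq : ℕ → S → ℝ)
    (hV0 : Vseq 0 = V₀)
    (hVsucc : ∀ t, Vseq (t + 1) = Tb p r γ (β (t + 1)) (Vseq t)) :
    ∀ t ≥ 1,
      supNorm (fun s => Vseq t s - Vstar s)
        ≤ γ ^ t * supNorm (fun s => V₀ s - Vstar s)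
          + Real.log (Fintype.card A) * ∑ k ∈ Finset.Icc 1 t, γ ^ (t - k) / β k := by
  intro t _
  have hp (s : S) (a : A) : ∑ s', |p s a s'| ≤ 1 := by
    simp only [abs_of_nonneg (hp0 s a _), hp1, le_refl]
  simpa only [supNorm_eq_norm, abs_of_nonneg hγ0, hV0, Pi.sub_def] using
    dbs_vi_error_recursion_general hp r γ hVstar hβ hVsucc t
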